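/- arXiv:2107.14625 — 5 statements merged into one kernel-verified Lean document; each statement's English description precedes it below -/
import Mathlib

section
/- For every observation parameter θ' ∈ ℝ^m, the SLMF Stackelberg security game with misperception 𝓗²(θ') admits a Misperception Strong Stackelberg Equilibrium: a pair (x*, y*) with x* ∈ Ω_l and y* ∈ BR(x*, θ') such that U_l(x*, y*) ≥ U_l(x, y) for every x ∈ Ω_l and every y ∈ BR(x, θ'). -/
open scoped BigOperators

noncomputable section

/-- Simplex-type strategy set with total resource `r` over `K` targets. -/
def stratSet {K : ℕ} (r : ℝ) : Set (Fin K → ℝ) :=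
  {x | ∑ k, x k = r ∧ ∀ k, 0 ≤ x k}

/-- Leader's utility. -/
def Ul {n K : ℕ} (Rl : ℝ) (Ulc Ulu : Fin K → ℝ)
    (x : Fin K → ℝ) (y : Fin n → Fin K → ℝ) : ℝ :=
  ∑ k, (∑ i, y i k) * (x k * Ulc k + (Rl - x k) * Ulu k)

/-- A follower's utility, with per-target covered/uncovered payoffs `Uc`, `Uu`
(the observation parameter is already substituted). -/
def Uf {K : ℕ} (Rl : ℝ) (Uc Uu : Fin K → ℝ) (x yi : Fin K → ℝ) : ℝ :=
  ∑ k, yi k * (x k * Uc k + (Rl - x k) * Uu k)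

/-- Best-response set of a follower with resource `Ri` against leader strategy `x`. -/
def BRi {K : ℕ} (Rl Ri : ℝ) (Uc Uu : Fin K → ℝ) (x : Fin K → ℝ) :
    Set (Fin K → ℝ) :=
  {yi | yi ∈ stratSet Ri ∧
    ∀ zi ∈ stratSet (K := K) Ri, Uf Rl Uc Uu x zi ≤ Uf Rl Uc Uu x yi}

/-- The auxiliary solution set SOL(y, θ′) (follower utilities already evaluated at θ′):
pairs (y′, λ) with y′ ∈ Ω_f, λ > 0,
Σᵢ (y′)ᵢᵏ (Uᵢᵘ − Uᵢᶜ)/(U_lᶜ − U_lᵘ) = λ Σᵢ yᵢᵏ for all k, and (y′)ᵢᵏ = 0 whenever yᵢᵏ = 0. -/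
def SOL {n K : ℕ} (R : Fin n → ℝ) (Ulc Ulu : Fin K → ℝ)
    (Uc Uu : Fin n → Fin K → ℝ) (y : Fin n → Fin K → ℝ) :
    Set ((Fin n → Fin K → ℝ) × ℝ) :=
  {p | (∀ i, p.1 i ∈ stratSet (R i)) ∧ 0 < p.2 ∧
    (∀ k, ∑ i, p.1 i k * ((Uu i k - Uc i k) / (Ulc k - Ulu k)) = p.2 * ∑ i, y i k) ∧
    (∀ i k, y i k = 0 → p.1 i k = 0)}

/-- gᵢ(x,θ,k), with θ already substituted into `Uc`, `Uu`. -/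
def gfun {K : ℕ} (Rl : ℝ) (Uc Uu : Fin K → ℝ) (x : Fin K → ℝ) (k : Fin K) : ℝ :=
  x k * Uc k + (Rl - x k) * Uu k

/-- The argmax target set Γ¹ᵢ(x,θ). -/
def Γ1 {K : ℕ} (Rl : ℝ) (Uc Uu : Fin K → ℝ) (x : Fin K → ℝ) : Set (Fin K) :=
  {k | ∀ l, gfun Rl Uc Uu x l ≤ gfun Rl Uc Uu x k}

/-! The pairs of a leader strategy and a profile of best responses to it form a compact set: this
graph is cut out of a product of compact strategy sets by inequalities between continuous utilities.
It is nonempty because each follower maximizes over a compact set, so the leader's utility attains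
its maximum on it. Ties between best responses are thereby broken in the leader's favour. -/

open Function Set

section StackelbergGame

variable {X Y α ι : Type*} {Z : ι → Type*}

/-- The best responses to the action `x` of a player with utility `u` and strategy set `B`.
`BRi Rl Ri Uc Uu` is definitionally `bestResponses (Uf Rl Uc Uu) (stratSet Ri)`. -/
def bestResponses [LE α] (u : X → Y → α) (B : Set Y) (x : X) : Set Y :=
  {y | y ∈ B ∧ ∀ z ∈ B, u x z ≤ u x y}

/-- The graph of the joint best-response correspondence: pairs of a leader strategy in `A` and a
profile in which each follower `i`, with utility `u i` and strategy set `B i`, best responds. -/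
def bestResponseGraph [LE α] (A : Set X) (B : ∀ i, Set (Z i)) (u : ∀ i, X → Z i → α) :
    Set (X × ∀ i, Z i) :=
  {p | p.1 ∈ A ∧ ∀ i, p.2 i ∈ bestResponses (u i) (B i) p.1}

variable [TopologicalSpace α]

theorem bestResponses_nonempty [TopologicalSpace Y] [LinearOrder α] [ClosedIciTopology α]
    {u : X → Y → α} {B : Set Y} {x : X}
    (hB : IsCompact B) (hB₀ : B.Nonempty) (hu : ContinuousOn (u x) B) :
    (bestResponses u B x).Nonempty :=
  hB.exists_isMaxOn hB₀ hu

variable [∀ i, TopologicalSpace (Z i)] {A : Set X} {B : ∀ i, Set (Z i)} {u : ∀ i, X → Z i → α}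

theorem bestResponseGraph_nonempty [LinearOrder α] [ClosedIciTopology α]
    (hA₀ : A.Nonempty) (hB : ∀ i, IsCompact (B i)) (hB₀ : ∀ i, (B i).Nonempty)
    (hu : ∀ i, ∀ x ∈ A, ContinuousOn (u i x) (B i)) :
    (bestResponseGraph A B u).Nonempty := by
  obtain ⟨x, hx⟩ := hA₀
  choose y hy using fun i => bestResponses_nonempty (hB i) (hB₀ i) (hu i x hx)
  exact ⟨(x, y), hx, hy⟩

variable [TopologicalSpace X]

theorem isCompact_setOf_forall_le [Preorder α] [OrderClosedTopology α] {s : Set X}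
    {f g : ι → X → α} (hs : IsCompact s)
    (hf : ∀ j, ContinuousOn (f j) s) (hg : ∀ j, ContinuousOn (g j) s) :
    IsCompact {x ∈ s | ∀ j, f j x ≤ g j x} := by
  have : CompactSpace s := isCompact_iff_compactSpace.mp hs
  have hclosed : IsClosed {x : s | ∀ j, f j x ≤ g j x} := by
    rw [ofPred_forall]
    exact isClosed_iInter fun j => isClosed_le (hf j).domRestrict (hg j).domRestrict
  have himage : Subtype.val '' {x : s | ∀ j, f j x ≤ g j x} = {x ∈ s | ∀ j, f j x ≤ g j x} :=
    Subtype.image_preimage_coe s {x | ∀ j, f j x ≤ g j x}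
  exact himage ▸ hclosed.isCompact.image continuous_subtype_val

theorem isCompact_bestResponseGraph [Preorder α] [OrderClosedTopology α]
    (hA : IsCompact A) (hB : ∀ i, IsCompact (B i))
    (hu : ∀ i, ContinuousOn (uncurry (u i)) (A ×ˢ B i)) :
    IsCompact (bestResponseGraph A B u) := by
  have hdeviation : ∀ d : Σ i, B i,
      ContinuousOn (fun p : X × ∀ i, Z i => u d.1 p.1 d.2) (A ×ˢ univ.pi B) := fun d =>
    (hu d.1).comp (f := fun p : X × ∀ i, Z i => (p.1, (d.2 : Z d.1))) (by fun_prop)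
      fun _ hp => ⟨hp.1, d.2.2⟩
  have hplayed : ∀ d : Σ i, B i,
      ContinuousOn (fun p : X × ∀ i, Z i => u d.1 p.1 (p.2 d.1)) (A ×ˢ univ.pi B) := fun d =>
    (hu d.1).comp (f := fun p : X × ∀ i, Z i => (p.1, p.2 d.1)) (by fun_prop)
      fun _ hp => ⟨hp.1, hp.2 d.1 trivial⟩
  convert isCompact_setOf_forall_le (hA.prod (isCompact_univ_pi hB)) hdeviation hplayed using 1
  ext p
  simp only [bestResponseGraph, bestResponses, mem_ofPred_eq, mem_prod, mem_univ_pi, Sigma.forall,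
    Subtype.forall, forall_and, and_assoc]

theorem exists_MSSE_general [LinearOrder α] [OrderClosedTopology α] {U : X → (∀ i, Z i) → α}
    (hA : IsCompact A) (hA₀ : A.Nonempty)
    (hB : ∀ i, IsCompact (B i)) (hB₀ : ∀ i, (B i).Nonempty)
    (hu : ∀ i, ContinuousOn (uncurry (u i)) (A ×ˢ B i))
    (hU : ContinuousOn (uncurry U) (A ×ˢ univ.pi B)) :
    ∃ x ∈ A, ∃ y : ∀ i, Z i, (∀ i, y i ∈ bestResponses (u i) (B i) x) ∧
      ∀ x' ∈ A, ∀ y' : ∀ i, Z i, (∀ i, y' i ∈ bestResponses (u i) (B i) x') → U x' y' ≤ U x y := by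
  have hcompact : IsCompact (bestResponseGraph A B u) := isCompact_bestResponseGraph hA hB hu
  have hnonempty : (bestResponseGraph A B u).Nonempty :=
    bestResponseGraph_nonempty hA₀ hB hB₀ fun i _ hx => (hu i).uncurry_left _ hx
  have hsubset : bestResponseGraph A B u ⊆ A ×ˢ univ.pi B :=
    fun _ hp => ⟨hp.1, fun i _ => (hp.2 i).1⟩
  obtain ⟨⟨x, y⟩, ⟨hx, hy⟩, hmax⟩ := hcompact.exists_isMaxOn hnonempty (hU.mono hsubset)
  exact ⟨x, hx, y, hy, fun x' hx' y' hy' => hmax (a := (x', y')) ⟨hx', hy'⟩⟩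

end StackelbergGame

section SecurityGame

variable {n K : ℕ}

theorem isCompact_stratSet (r : ℝ) : IsCompact (stratSet (K := K) r) := by
  have hclosed : IsClosed (stratSet (K := K) r) :=
    (isClosed_eq (by fun_prop) (by fun_prop)).inter (isClosed_Ici (a := (0 : Fin K → ℝ)))
  have hbounded : stratSet r ⊆ Icc (0 : Fin K → ℝ) fun _ => r := fun x ⟨hsum, hnonneg⟩ =>
    ⟨hnonneg, fun k => hsum ▸ Finset.single_le_sum (fun j _ => hnonneg j) (Finset.mem_univ k)⟩
  exact isCompact_Icc.of_isClosed_subset hclosed hbounded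

theorem stratSet_nonempty (hK : 0 < K) {r : ℝ} (hr : 0 ≤ r) :
    (stratSet (K := K) r).Nonempty :=
  have hnonneg : (0 : Fin K → ℝ) ≤ Pi.single ⟨0, hK⟩ r := Pi.single_nonneg.mpr hr
  ⟨Pi.single ⟨0, hK⟩ r, by simp, hnonneg⟩

theorem continuous_uncurry_Uf (Rl : ℝ) (Uc Uu : Fin K → ℝ) :
    Continuous (uncurry (Uf Rl Uc Uu)) := by
  unfold uncurry Uf
  fun_prop

theorem continuous_uncurry_Ul (Rl : ℝ) (Ulc Ulu : Fin K → ℝ) :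
    Continuous (uncurry (Ul (n := n) Rl Ulc Ulu)) := by
  unfold uncurry Ul
  fun_prop

end SecurityGame

/-- for every observation θ′, the game with misperception 𝓗²(θ′) admits a
Misperception Strong Stackelberg Equilibrium. -/
theorem exists_MSSE
    (n K m : ℕ) (hn : 1 ≤ n) (hK : 1 ≤ K)
    (Rl : ℝ) (hRl : 0 < Rl) (R : Fin n → ℝ) (hR : ∀ i, 0 < R i)
    (Ulc Ulu : Fin K → ℝ)
    (Uic Uiu : Fin n → EuclideanSpace ℝ (Fin m) → Fin K → ℝ) :
    ∀ θ' : EuclideanSpace ℝ (Fin m),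
      ∃ x ∈ stratSet (K := K) Rl, ∃ y : Fin n → Fin K → ℝ,
        (∀ i, y i ∈ BRi Rl (R i) (Uic i θ') (Uiu i θ') x) ∧
        (∀ x' ∈ stratSet (K := K) Rl, ∀ y' : Fin n → Fin K → ℝ,
          (∀ i, y' i ∈ BRi Rl (R i) (Uic i θ') (Uiu i θ') x') →
          Ul Rl Ulc Ulu x' y' ≤ Ul Rl Ulc Ulu x y) := by
  intro θ'
  exact exists_MSSE_general (isCompact_stratSet Rl) (stratSet_nonempty hK hRl.le)
    (fun i => isCompact_stratSet (R i)) (fun i => stratSet_nonempty hK (hR i).le)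
    (fun i => (continuous_uncurry_Uf Rl (Uic i θ') (Uiu i θ')).continuousOn)
    (continuous_uncurry_Ul Rl Ulc Ulu).continuousOn
end
end

section
/- Suppose Θ ⊆ ℝ^m is compact and convex with nonempty interior and θ_0 ∈ int(Θ); for every i,k the maps θ ↦ U_i^c(θ,t_k), θ ↦ U_i^u(θ,t_k) are differentiable on Θ; U_l^c(t_k) > U_l^u(t_k) for all k; and U_i^c(θ',t_k) < U_i^u(θ',t_k) for all θ' ∈ Θ, i, k. Let (x_S, y_S) be a Strong Stackelberg Equilibrium with true parameter θ_0 such that for each follower i the argmax set Γ_i^1(x_S,θ_0) of targets is a strict maximizer set (g_i(x_S,θ_0,k) > g_i(x_S,θ_0,l) for k ∈ Γ_i^1, l ∉ Γ_i^1). Then there exists a convex subset δ_θ ⊆ Θ with nonempty interior such that for every θ' ∈ δ_θ, every follower i, and every y'_i ∈ argmax_{y_i ∈ Ω_i} U_i(x_S, y_i, θ'), one has U_i(x_S, y'_i, θ_0) = U_i(x_S, (y_S)_i, θ_0). -/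
open scoped BigOperators

noncomputable section

/-!
A best response puts resource only on targets maximizing `gfun`: otherwise moving that resource to
a better target would be an improvement. Conversely, every strategy supported on such targets is a
best response. The set of targets is finite and payoffs are continuous at `θ0`, so a target that is
not maximal at `θ0` stays non-maximal nearby; hence near `θ0` best responses for `θ'` are already
best responses for `θ0`, and two best responses for `θ0` have the same utility.
-/

open Filter Function Topology

theorem eventually_forall_maximizer_imp {X ι α : Type*} [TopologicalSpace X] [Finite ι]
    [LinearOrder α] [TopologicalSpace α] [OrderClosedTopology α] {f : X → ι → α} {x₀ : X}
    (hf : ∀ k, ContinuousAt (fun x => f x k) x₀) :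
    ∀ᶠ x in 𝓝 x₀, ∀ k, (∀ l, f x l ≤ f x k) → ∀ l, f x₀ l ≤ f x₀ k := by
  refine eventually_all.2 fun k => ?_
  by_cases hk : ∀ l, f x₀ l ≤ f x₀ k
  · exact .of_forall fun _ _ => hk
  · obtain ⟨l, hkl⟩ := not_forall.1 hk
    have hlt : ∀ᶠ x in 𝓝 x₀, f x k < f x l := (hf k).eventually_lt (hf l) (not_le.1 hkl)
    exact hlt.mono fun x hx hmax => absurd (hmax l) hx.not_ge

section BestResponse

variable {K : ℕ} {Rl r : ℝ} {Uc Uu x y z : Fin K → ℝ}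

theorem Uf_eq_dotProduct : Uf Rl Uc Uu x y = y ⬝ᵥ gfun Rl Uc Uu x := rfl

theorem transfer_mem_stratSet (hy : y ∈ stratSet r) (k l : Fin K) :
    y + Pi.single l (y k) - Pi.single k (y k) ∈ stratSet r := by
  refine ⟨by simp [Finset.sum_add_distrib, hy.1], fun j => ?_⟩
  have hl : (0 : Fin K → ℝ) ≤ Pi.single l (y k) := Pi.single_nonneg.2 (hy.2 k)
  obtain rfl | hjk := eq_or_ne j k
  · simpa using hl j
  · simpa [hjk] using add_nonneg (hy.2 j) (hl j)

theorem support_subset_Γ1_of_mem_BRi (hy : y ∈ BRi Rl r Uc Uu x) :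
    support y ⊆ Γ1 Rl Uc Uu x := by
  intro k hk l
  have hpos : 0 < y k := (hy.1.2 k).lt_of_ne' hk
  have hle := hy.2 _ (transfer_mem_stratSet hy.1 k l)
  simp only [Uf_eq_dotProduct, sub_dotProduct, add_dotProduct, single_dotProduct] at hle
  exact le_of_mul_le_mul_left (by linarith) hpos

theorem mem_BRi_of_support_subset_Γ1 (hy : y ∈ stratSet r)
    (hsupp : support y ⊆ Γ1 Rl Uc Uu x) : y ∈ BRi Rl r Uc Uu x := by
  refine ⟨hy, fun z hz => ?_⟩
  obtain _ | _ := isEmpty_or_nonempty (Fin K)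
  · simp [Uf]
  obtain ⟨k, hk⟩ := Finite.exists_max (gfun Rl Uc Uu x)
  have hconst : ∀ j, y j * gfun Rl Uc Uu x k = y j * gfun Rl Uc Uu x j := fun j =>
    mul_eq_mul_left_iff.2 <| or_iff_not_imp_right.2 fun hj => (hsupp hj k).antisymm (hk j)
  calc
    Uf Rl Uc Uu x z = ∑ j, z j * gfun Rl Uc Uu x j := rfl
    _ ≤ ∑ j, z j * gfun Rl Uc Uu x k :=
      Finset.sum_le_sum fun j _ => mul_le_mul_of_nonneg_left (hk j) (hz.2 j)
    _ = ∑ j, y j * gfun Rl Uc Uu x k := by rw [← Finset.sum_mul, ← Finset.sum_mul, hz.1, hy.1]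
    _ = ∑ j, y j * gfun Rl Uc Uu x j := Finset.sum_congr rfl fun j _ => hconst j
    _ = Uf Rl Uc Uu x y := rfl

theorem BRi_subset_BRi_of_Γ1_subset {Uc' Uu' : Fin K → ℝ}
    (h : Γ1 Rl Uc Uu x ⊆ Γ1 Rl Uc' Uu' x) : BRi Rl r Uc Uu x ⊆ BRi Rl r Uc' Uu' x :=
  fun _ hy => mem_BRi_of_support_subset_Γ1 hy.1 ((support_subset_Γ1_of_mem_BRi hy).trans h)

theorem Uf_eq_Uf_of_mem_BRi (hy : y ∈ BRi Rl r Uc Uu x) (hz : z ∈ BRi Rl r Uc Uu x) :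
    Uf Rl Uc Uu x y = Uf Rl Uc Uu x z :=
  (hz.2 y hy.1).antisymm (hy.2 z hz.1)

end BestResponse

section Robustness

variable {E : Type*} [TopologicalSpace E] {K : ℕ} {Rl : ℝ} {x : Fin K → ℝ} {θ0 : E}

theorem eventually_BRi_subset_BRi {r : ℝ} {Uc Uu : E → Fin K → ℝ}
    (hc : ContinuousAt Uc θ0) (hu : ContinuousAt Uu θ0) :
    ∀ᶠ θ in 𝓝 θ0, BRi Rl r (Uc θ) (Uu θ) x ⊆ BRi Rl r (Uc θ0) (Uu θ0) x := by
  have hg : ∀ k, ContinuousAt (fun θ => gfun Rl (Uc θ) (Uu θ) x k) θ0 := fun k =>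
    ((continuousAt_pi.1 hc k).const_mul (x k)).add ((continuousAt_pi.1 hu k).const_mul (Rl - x k))
  exact (eventually_forall_maximizer_imp hg).mono fun _ hmax => BRi_subset_BRi_of_Γ1_subset hmax

theorem robust_MSSE_exists_region_general [AddCommMonoid E] [Module ℝ E] [LocallyConvexSpace ℝ E]
    {ι : Type*} [Finite ι] {R : ι → ℝ} {Uic Uiu : ι → E → Fin K → ℝ} {Θ : Set E}
    (hΘ : Θ ∈ 𝓝 θ0) (hc : ∀ i, ContinuousAt (Uic i) θ0) (hu : ∀ i, ContinuousAt (Uiu i) θ0)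
    {y : ι → Fin K → ℝ} (hy : ∀ i, y i ∈ BRi Rl (R i) (Uic i θ0) (Uiu i θ0) x) :
    ∃ δ ⊆ Θ, Convex ℝ δ ∧ θ0 ∈ interior δ ∧
      ∀ θ' ∈ δ, ∀ i, ∀ y' ∈ BRi Rl (R i) (Uic i θ') (Uiu i θ') x,
        Uf Rl (Uic i θ0) (Uiu i θ0) x y' = Uf Rl (Uic i θ0) (Uiu i θ0) x (y i) := by
  have hBR : ∀ᶠ θ in 𝓝 θ0, ∀ i,
      BRi Rl (R i) (Uic i θ) (Uiu i θ) x ⊆ BRi Rl (R i) (Uic i θ0) (Uiu i θ0) x :=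
    eventually_all.2 fun i => eventually_BRi_subset_BRi (hc i) (hu i)
  obtain ⟨δ, ⟨hδ, hconv⟩, hsub⟩ :=
    (LocallyConvexSpace.convex_basis (𝕜 := ℝ) θ0).mem_iff.1 (inter_mem hΘ hBR)
  exact ⟨δ, fun _ hθ => (hsub hθ).1, hconv, mem_interior_iff_mem_nhds.2 hδ,
    fun θ' hθ' i _ hy' => Uf_eq_Uf_of_mem_BRi ((hsub hθ').2 i hy') (hy i)⟩

end Robustness

/-- Theorem 4, part 1: existence of a convex robustness set with nonempty
interior on which the followers' realized utilities at the SSE are unchanged. -/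
theorem robust_MSSE_exists_region
    (n K m : ℕ) (hn : 1 ≤ n) (hK : 1 ≤ K)
    (Rl : ℝ) (hRl : 0 < Rl) (R : Fin n → ℝ) (hR : ∀ i, 0 < R i)
    (Ulc Ulu : Fin K → ℝ)
    (Uic Uiu : Fin n → EuclideanSpace ℝ (Fin m) → Fin K → ℝ)
    (θ0 : EuclideanSpace ℝ (Fin m))
    (Θ : Set (EuclideanSpace ℝ (Fin m)))
    (hΘc : IsCompact Θ) (hΘconv : Convex ℝ Θ)
    (hΘint : (interior Θ).Nonempty) (hθ0 : θ0 ∈ interior Θ)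
    (hdc : ∀ i k, DifferentiableOn ℝ (fun θ => Uic i θ k) Θ)
    (hdu : ∀ i k, DifferentiableOn ℝ (fun θ => Uiu i θ k) Θ)
    (hA1 : ∀ k, Ulu k < Ulc k)
    (hA3 : ∀ θ' ∈ Θ, ∀ i k, Uic i θ' k < Uiu i θ' k)
    (xS : Fin K → ℝ) (yS : Fin n → Fin K → ℝ)
    (hxS : xS ∈ stratSet (K := K) Rl)
    (hyS : ∀ i, yS i ∈ BRi Rl (R i) (Uic i θ0) (Uiu i θ0) xS)
    (hmax : ∀ x ∈ stratSet (K := K) Rl, ∀ y : Fin n → Fin K → ℝ,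
      (∀ i, y i ∈ BRi Rl (R i) (Uic i θ0) (Uiu i θ0) x) →
      Ul Rl Ulc Ulu x y ≤ Ul Rl Ulc Ulu xS yS)
    (hstrict : ∀ i, ∀ k ∈ Γ1 Rl (Uic i θ0) (Uiu i θ0) xS,
      ∀ l, l ∉ Γ1 Rl (Uic i θ0) (Uiu i θ0) xS →
        gfun Rl (Uic i θ0) (Uiu i θ0) xS l < gfun Rl (Uic i θ0) (Uiu i θ0) xS k) :
    ∃ δ : Set (EuclideanSpace ℝ (Fin m)), δ ⊆ Θ ∧ Convex ℝ δ ∧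
      (interior δ).Nonempty ∧
      ∀ θ' ∈ δ, ∀ i, ∀ y' ∈ BRi Rl (R i) (Uic i θ') (Uiu i θ') xS,
        Uf Rl (Uic i θ0) (Uiu i θ0) xS y' = Uf Rl (Uic i θ0) (Uiu i θ0) xS (yS i) := by
  have hΘ : Θ ∈ 𝓝 θ0 := mem_interior_iff_mem_nhds.1 hθ0
  obtain ⟨δ, hδΘ, hconv, hint, hδ⟩ := robust_MSSE_exists_region_general hΘ
    (fun i => continuousAt_pi.2 fun k => (hdc i k).continuousOn.continuousAt hΘ)
    (fun i => continuousAt_pi.2 fun k => (hdu i k).continuousOn.continuousAt hΘ) hyS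
  exact ⟨δ, hδΘ, hconv, ⟨θ0, hint⟩, hδ⟩
end
end

section
/- Suppose U_l^c(t_k) > U_l^u(t_k) for every target k. Let y ∈ Ω_f, θ' ∈ ℝ^m, and (y', λ) ∈ SOL(y, θ'). Then for all x, x' ∈ Ω_l, U_l(x, y) − U_l(x', y) = (1/λ) · (Σ_{i=1}^n U_i(x', y'_i, θ') − Σ_{i=1}^n U_i(x, y'_i, θ')). In particular, U_l(x, y) > U_l(x', y) if and only if Σ_{i=1}^n U_i(x, y'_i, θ') < Σ_{i=1}^n U_i(x', y'_i, θ'), and U_l(x, y) = U_l(x', y) if and only if Σ_{i=1}^n U_i(x, y'_i, θ') = Σ_{i=1}^n U_i(x', y'_i, θ'). -/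
open scoped BigOperators

noncomputable section

/-!
Each utility is affine in `x`, so replacing `x'` by `x` changes it by a sum over targets of
`(x k - x' k) * (Uc k - Uu k)`, weighted by the attacking resources. The balance condition of `SOL`
says that at every target the followers' aggregate weighted payoff gap is `-lam` times the leader's.
Exchanging the sums over targets and followers, the followers' total utility therefore changes by
`-lam` times the change in the leader's utility.
-/

theorem Uf_sub_Uf {K : ℕ} (Rl : ℝ) (Uc Uu x x' z : Fin K → ℝ) :
    Uf Rl Uc Uu x z - Uf Rl Uc Uu x' z = ∑ k, z k * ((x k - x' k) * (Uc k - Uu k)) := by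
  unfold Uf
  rw [← Finset.sum_sub_distrib]
  exact Finset.sum_congr rfl fun k _ => by ring

theorem Ul_eq_Uf_sum {n K : ℕ} (Rl : ℝ) (Ulc Ulu x : Fin K → ℝ) (y : Fin n → Fin K → ℝ) :
    Ul Rl Ulc Ulu x y = Uf Rl Ulc Ulu x (∑ i, y i) := by
  simp only [Ul, Uf, Finset.sum_apply]

section UtilityIdentity

variable {n K : ℕ} {Rl lam : ℝ} {Ulc Ulu : Fin K → ℝ} {Uc Uu y y' : Fin n → Fin K → ℝ}

theorem sum_mul_sub_eq_of_mem_SOL {R : Fin n → ℝ} (hU : ∀ k, Ulu k ≠ Ulc k)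
    (h : (y', lam) ∈ SOL R Ulc Ulu Uc Uu y) (k : Fin K) :
    ∑ i, y' i k * (Uu i k - Uc i k) = lam * (∑ i, y i k) * (Ulc k - Ulu k) := by
  obtain ⟨-, -, hratio, -⟩ := h
  have hne : Ulc k - Ulu k ≠ 0 := sub_ne_zero.mpr (hU k).symm
  simpa only [← mul_div_assoc, ← Finset.sum_div, div_eq_iff hne] using hratio k

/-- `hbal` is the balance condition of `SOL` cleared of denominators, so that it does not read
`x / 0 = 0` at a target with `Ulc k = Ulu k`. -/
theorem mul_Ul_sub_Ul_eq_sum_Uf_sub_sum_Uf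
    (hbal : ∀ k, ∑ i, y' i k * (Uu i k - Uc i k) = lam * (∑ i, y i k) * (Ulc k - Ulu k))
    (x x' : Fin K → ℝ) :
    lam * (Ul Rl Ulc Ulu x y - Ul Rl Ulc Ulu x' y) =
      ∑ i, Uf Rl (Uc i) (Uu i) x' (y' i) - ∑ i, Uf Rl (Uc i) (Uu i) x (y' i) := by
  calc
    lam * (Ul Rl Ulc Ulu x y - Ul Rl Ulc Ulu x' y)
      = ∑ k, (x k - x' k) * (lam * (∑ i, y i k) * (Ulc k - Ulu k)) := by
        rw [Ul_eq_Uf_sum, Ul_eq_Uf_sum, Uf_sub_Uf, Finset.mul_sum]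
        refine Finset.sum_congr rfl fun k _ => ?_
        rw [Finset.sum_apply]
        ring
    _ = ∑ k, ∑ i, y' i k * ((x' k - x k) * (Uc i k - Uu i k)) := by
        refine Finset.sum_congr rfl fun k _ => ?_
        rw [← hbal k, Finset.mul_sum]
        exact Finset.sum_congr rfl fun i _ => by ring
    _ = ∑ i, (Uf Rl (Uc i) (Uu i) x' (y' i) - Uf Rl (Uc i) (Uu i) x (y' i)) := by
        simp only [Uf_sub_Uf]
        exact Finset.sum_comm
    _ = ∑ i, Uf Rl (Uc i) (Uu i) x' (y' i) - ∑ i, Uf Rl (Uc i) (Uu i) x (y' i) :=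
        Finset.sum_sub_distrib ..

theorem leader_follower_utility_identity_general (hlam : 0 < lam)
    (hbal : ∀ k, ∑ i, y' i k * (Uu i k - Uc i k) = lam * (∑ i, y i k) * (Ulc k - Ulu k))
    (x x' : Fin K → ℝ) :
    (Ul Rl Ulc Ulu x y - Ul Rl Ulc Ulu x' y =
        (1 / lam) * (∑ i, Uf Rl (Uc i) (Uu i) x' (y' i) -
          ∑ i, Uf Rl (Uc i) (Uu i) x (y' i))) ∧
      (Ul Rl Ulc Ulu x' y < Ul Rl Ulc Ulu x y ↔
        ∑ i, Uf Rl (Uc i) (Uu i) x (y' i) < ∑ i, Uf Rl (Uc i) (Uu i) x' (y' i)) ∧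
      (Ul Rl Ulc Ulu x y = Ul Rl Ulc Ulu x' y ↔
        ∑ i, Uf Rl (Uc i) (Uu i) x (y' i) = ∑ i, Uf Rl (Uc i) (Uu i) x' (y' i)) := by
  have scaled_diff := mul_Ul_sub_Ul_eq_sum_Uf_sub_sum_Uf (Rl := Rl) hbal x x'
  refine ⟨?_, ?_, ?_⟩
  · rw [← scaled_diff, one_div, inv_mul_cancel_left₀ hlam.ne']
  · rw [← sub_pos, ← mul_pos_iff_of_pos_left hlam, scaled_diff, sub_pos]
  · rw [← sub_eq_zero, ← mul_eq_zero_iff_left hlam.ne', scaled_diff, sub_eq_zero, eq_comm]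

end UtilityIdentity

/-- Step 1 of Theorem 2: the key identity relating the leader's utility
differences to the followers' aggregate utility differences through SOL(y, θ′). -/
theorem leader_follower_utility_identity
    (n K m : ℕ) (hn : 1 ≤ n) (hK : 1 ≤ K)
    (Rl : ℝ) (hRl : 0 < Rl) (R : Fin n → ℝ) (hR : ∀ i, 0 < R i)
    (Ulc Ulu : Fin K → ℝ)
    (Uic Uiu : Fin n → EuclideanSpace ℝ (Fin m) → Fin K → ℝ)
    (θ' : EuclideanSpace ℝ (Fin m))
    (hA1 : ∀ k, Ulu k < Ulc k)
    (y : Fin n → Fin K → ℝ) (hy : ∀ i, y i ∈ stratSet (K := K) (R i))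
    (y' : Fin n → Fin K → ℝ) (lam : ℝ)
    (hSOL : (y', lam) ∈ SOL R Ulc Ulu (fun i => Uic i θ') (fun i => Uiu i θ') y) :
    ∀ x ∈ stratSet (K := K) Rl, ∀ x' ∈ stratSet (K := K) Rl,
      (Ul Rl Ulc Ulu x y - Ul Rl Ulc Ulu x' y =
        (1 / lam) * ((∑ i, Uf Rl (Uic i θ') (Uiu i θ') x' (y' i)) -
          (∑ i, Uf Rl (Uic i θ') (Uiu i θ') x (y' i)))) ∧
      (Ul Rl Ulc Ulu x' y < Ul Rl Ulc Ulu x y ↔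
        (∑ i, Uf Rl (Uic i θ') (Uiu i θ') x (y' i)) <
          (∑ i, Uf Rl (Uic i θ') (Uiu i θ') x' (y' i))) ∧
      (Ul Rl Ulc Ulu x y = Ul Rl Ulc Ulu x' y ↔
        (∑ i, Uf Rl (Uic i θ') (Uiu i θ') x (y' i)) =
          (∑ i, Uf Rl (Uic i θ') (Uiu i θ') x' (y' i))) := fun x _ x' _ =>
  leader_follower_utility_identity_general hSOL.2.1
    (sum_mul_sub_eq_of_mem_SOL (fun k => (hA1 k).ne) hSOL) x x'
end
end

section
/- In the single-leader-single-follower case n = 1, suppose U_l^c(t_k) > U_l^u(t_k) and U_1^c(θ',t_k) < U_1^u(θ',t_k) for every target k, where θ' ∈ ℝ^m. Then for every y ∈ Ω_1 the set SOL(y, θ') is nonempty; explicitly, taking λ = R_1 / Σ_{k=1}^K y^k (U_l^c(t_k) − U_l^u(t_k))/(U_1^u(θ',t_k) − U_1^c(θ',t_k)) and (y')^k = λ y^k (U_l^c(t_k) − U_l^u(t_k))/(U_1^u(θ',t_k) − U_1^c(θ',t_k)) gives (y', λ) ∈ SOL(y, θ'). -/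
open scoped BigOperators

noncomputable section

/-!
Let `wᵏ = (U_lᶜ - U_lᵘ) / (U₁ᵘ - U₁ᶜ)` at target `k`. With a single follower the equation of `SOL`
at `k` involves only `(y')ᵏ` and reads `(y')ᵏ / wᵏ = λ yᵏ`, so `(y')ᵏ = λ yᵏ wᵏ`; the resource
constraint `∑ (y')ᵏ = R₁` then fixes `λ = R₁ / ∑ yᵏ wᵏ`. With several followers the same reweighting
works whenever one `λ` meets all their resource constraints.
-/

theorem sum_mul_pos_of_sum_pos {ι A : Type*} [Semiring A] [PartialOrder A] [IsStrictOrderedRing A]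
    {s : Finset ι} {f w : ι → A} (hf : ∀ i ∈ s, 0 ≤ f i) (hw : ∀ i ∈ s, 0 < w i)
    (hsum : 0 < ∑ i ∈ s, f i) : 0 < ∑ i ∈ s, f i * w i := by
  obtain ⟨i, hi, hfi⟩ := (Finset.sum_pos_iff_of_nonneg hf).1 hsum
  exact Finset.sum_pos' (fun j hj => mul_nonneg (hf j hj) (hw j hj).le)
    ⟨i, hi, mul_pos hfi (hw i hi)⟩

section Reweighting

variable {n K : ℕ} {c : ℝ}

theorem mul_mul_mem_stratSet {y w : Fin K → ℝ} (hc : 0 ≤ c) (hy : ∀ k, 0 ≤ y k)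
    (hw : ∀ k, 0 ≤ w k) : (fun k => c * y k * w k) ∈ stratSet (c * ∑ k, y k * w k) :=
  ⟨by simp only [Finset.mul_sum, mul_assoc],
    fun k => mul_nonneg (mul_nonneg hc (hy k)) (hw k)⟩

/-- The ratio of the leader's gain to the follower's loss when target `k` is covered: the reciprocal
of the coefficient of that follower in the equation of `SOL` at `k`. -/
def payoffRatio (Ulc Ulu Uc Uu : Fin K → ℝ) (k : Fin K) : ℝ :=
  (Ulc k - Ulu k) / (Uu k - Uc k)

theorem inv_payoffRatio (Ulc Ulu Uc Uu : Fin K → ℝ) (k : Fin K) :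
    (payoffRatio Ulc Ulu Uc Uu k)⁻¹ = (Uu k - Uc k) / (Ulc k - Ulu k) :=
  inv_div _ _

theorem payoffRatio_pos {Ulc Ulu Uc Uu : Fin K → ℝ} {k : Fin K} (hl : Ulu k < Ulc k)
    (hf : Uc k < Uu k) : 0 < payoffRatio Ulc Ulu Uc Uu k :=
  div_pos (sub_pos.2 hl) (sub_pos.2 hf)

theorem mul_payoffRatio_mem_SOL {R : Fin n → ℝ} {Ulc Ulu : Fin K → ℝ}
    {Uc Uu y : Fin n → Fin K → ℝ} (hc : 0 < c) (hy : ∀ i k, 0 ≤ y i k)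
    (hw : ∀ i k, 0 < payoffRatio Ulc Ulu (Uc i) (Uu i) k)
    (hR : ∀ i, c * ∑ k, y i k * payoffRatio Ulc Ulu (Uc i) (Uu i) k = R i) :
    (fun i k => c * y i k * payoffRatio Ulc Ulu (Uc i) (Uu i) k, c) ∈ SOL R Ulc Ulu Uc Uu y := by
  refine ⟨fun i => ?resource, hc, fun k => ?balance, fun i k hyik => ?support⟩
  case resource => exact hR i ▸ mul_mul_mem_stratSet hc.le (hy i) fun k => (hw i k).le
  case balance =>
    simp only [← inv_payoffRatio, mul_inv_cancel_right₀ (hw _ k).ne', Finset.mul_sum]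
  case support => simp only [hyik, mul_zero, zero_mul]

end Reweighting

/-- in the single-follower case, SOL(y, θ′) is nonempty, with the explicit
witness (y′, λ). -/
theorem SOL_nonempty_single_follower
    (K m : ℕ) (hK : 1 ≤ K)
    (Rl : ℝ) (hRl : 0 < Rl) (R : Fin 1 → ℝ) (hR : ∀ i, 0 < R i)
    (Ulc Ulu : Fin K → ℝ)
    (Uic Uiu : Fin 1 → EuclideanSpace ℝ (Fin m) → Fin K → ℝ)
    (θ' : EuclideanSpace ℝ (Fin m))
    (hA1 : ∀ k, Ulu k < Ulc k)
    (hA3 : ∀ k, Uic 0 θ' k < Uiu 0 θ' k)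
    (y : Fin K → ℝ) (hy : y ∈ stratSet (K := K) (R 0)) :
    ((fun (_ : Fin 1) k =>
        (R 0 / ∑ j, y j * ((Ulc j - Ulu j) / (Uiu 0 θ' j - Uic 0 θ' j))) *
          y k * ((Ulc k - Ulu k) / (Uiu 0 θ' k - Uic 0 θ' k)),
      R 0 / ∑ j, y j * ((Ulc j - Ulu j) / (Uiu 0 θ' j - Uic 0 θ' j)))
        ∈ SOL R Ulc Ulu (fun i => Uic i θ') (fun i => Uiu i θ') (fun _ => y)) ∧
    (SOL R Ulc Ulu (fun i => Uic i θ') (fun i => Uiu i θ') (fun _ => y)).Nonempty := by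
  have hw (k : Fin K) : 0 < payoffRatio Ulc Ulu (Uic 0 θ') (Uiu 0 θ') k :=
    payoffRatio_pos (hA1 k) (hA3 k)
  have hsum : 0 < ∑ k, y k * payoffRatio Ulc Ulu (Uic 0 θ') (Uiu 0 θ') k :=
    sum_mul_pos_of_sum_pos (fun k _ => hy.2 k) (fun k _ => hw k) (hy.1.symm ▸ hR 0)
  have hUic : (fun i => Uic i θ') = fun _ => Uic 0 θ' := funext (Fin.forall_fin_one.2 rfl)
  have hUiu : (fun i => Uiu i θ') = fun _ => Uiu 0 θ' := funext (Fin.forall_fin_one.2 rfl)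
  rw [hUic, hUiu]
  have hmem := mul_payoffRatio_mem_SOL (Uc := fun _ => Uic 0 θ') (Uu := fun _ => Uiu 0 θ')
    (y := fun _ => y) (div_pos (hR 0) hsum) (fun _ => hy.2) (fun _ => hw)
    (Fin.forall_fin_one.2 (div_mul_cancel₀ (R 0) hsum.ne'))
  exact ⟨hmem, _, hmem⟩
end
end

section
/- Suppose U_l^c(t_k) > U_l^u(t_k) for every target k and U_i^c(θ',t_k) < U_i^u(θ',t_k) for every follower i and target k, where θ' ∈ ℝ^m. Let y ∈ Ω_f be a follower strategy profile in which all followers attack the same target: there exists a target k' with y_i^{k'} = R_i for every i. Then SOL(y, θ') is nonempty; explicitly, taking λ = (Σ_{i=1}^n R_i (U_i^u(θ',t_{k'}) − U_i^c(θ',t_{k'}))/(U_l^c(t_{k'}) − U_l^u(t_{k'}))) / (Σ_{i=1}^n R_i) and y' = y gives (y', λ) ∈ SOL(y, θ'). -/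
open scoped BigOperators

noncomputable section

theorem sum_pos_of_sum_mul_pos {ι α : Type*} [NonUnitalNonAssocSemiring α] [PartialOrder α]
    [IsOrderedAddMonoid α] {s : Finset ι} {f g : ι → α} (hf : ∀ i ∈ s, 0 ≤ f i)
    (hfg : 0 < ∑ i ∈ s, f i * g i) : 0 < ∑ i ∈ s, f i := by
  refine (Finset.sum_nonneg hf).lt_of_ne' fun hsum => hfg.ne' ?_
  have hzero := (Finset.sum_eq_zero_iff_of_nonneg hf).1 hsum
  exact Finset.sum_eq_zero fun i hi => by rw [hzero i hi, zero_mul]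

theorem eq_single_of_mem_stratSet {K : ℕ} {r : ℝ} {x : Fin K → ℝ} {k' : Fin K}
    (hx : x ∈ stratSet r) (hk' : x k' = r) : x = Pi.single k' r := by
  obtain ⟨hsum, hnonneg⟩ := hx
  ext k
  rcases eq_or_ne k k' with rfl | hk
  · rw [Pi.single_eq_same, hk']
  · have hle : x k + x k' ≤ ∑ j, x j :=
      Finset.add_le_sum (fun j _ => hnonneg j) (Finset.mem_univ k) (Finset.mem_univ k') hk
    rw [Pi.single_eq_of_ne hk]
    linarith [hnonneg k]

section SameTarget

variable {n K : ℕ} {R : Fin n → ℝ} {Ulc Ulu : Fin K → ℝ} {Uc Uu y : Fin n → Fin K → ℝ}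
  {k' : Fin K}

-- Nobody attacks a target other than `k'`, so there the equation defining `SOL` reads `0 = 0`.
theorem self_mem_SOL_iff_of_same_target {lam : ℝ} (hy : ∀ i, y i ∈ stratSet (R i))
    (hsame : ∀ i, y i k' = R i) :
    (y, lam) ∈ SOL R Ulc Ulu Uc Uu y ↔
      0 < lam ∧ ∑ i, R i * ((Uu i k' - Uc i k') / (Ulc k' - Ulu k')) = lam * ∑ i, R i := by
  constructor
  · rintro ⟨-, hlam, hbalance, -⟩
    exact ⟨hlam, by simpa only [hsame] using hbalance k'⟩
  · rintro ⟨hlam, hbalance⟩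
    refine ⟨hy, hlam, fun k => ?_, fun _ _ h => h⟩
    rcases eq_or_ne k k' with rfl | hk
    · simpa only [hsame] using hbalance
    · have hzero (i : Fin n) : y i k = 0 := by
        rw [eq_single_of_mem_stratSet (hy i) (hsame i), Pi.single_eq_of_ne hk]
      simp only [hzero, zero_mul, Finset.sum_const_zero, mul_zero]

theorem SOL_nonempty_same_target_general
    (hne : ∀ k, Ulu k ≠ Ulc k) (hle : Ulu k' ≤ Ulc k')
    (hgain : 0 < ∑ i, R i * (Uu i k' - Uc i k'))
    (hy : ∀ i, y i ∈ stratSet (R i)) (hsame : ∀ i, y i k' = R i) :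
    (y, (∑ i, R i * ((Uu i k' - Uc i k') / (Ulc k' - Ulu k'))) / ∑ i, R i)
        ∈ SOL R Ulc Ulu Uc Uu y ∧
      (SOL R Ulc Ulu Uc Uu y).Nonempty := by
  have hRpos : 0 < ∑ i, R i :=
    sum_pos_of_sum_mul_pos (fun i _ => hsame i ▸ (hy i).2 k') hgain
  have hweight : 0 < ∑ i, R i * ((Uu i k' - Uc i k') / (Ulc k' - Ulu k')) := by
    simp only [← mul_div_assoc, ← Finset.sum_div]
    exact div_pos hgain (sub_pos.2 (hle.lt_of_ne (hne k')))
  have hmem := (self_mem_SOL_iff_of_same_target hy hsame).2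
    ⟨div_pos hweight hRpos, (div_mul_cancel₀ _ hRpos.ne').symm⟩
  exact ⟨hmem, _, hmem⟩

end SameTarget

/-- if all followers attack the same target k′, then SOL(y, θ′) is nonempty,
with the explicit witness (y, λ). -/
theorem SOL_nonempty_same_target
    (n K m : ℕ) (hn : 1 ≤ n) (hK : 1 ≤ K)
    (Rl : ℝ) (hRl : 0 < Rl) (R : Fin n → ℝ) (hR : ∀ i, 0 < R i)
    (Ulc Ulu : Fin K → ℝ)
    (Uic Uiu : Fin n → EuclideanSpace ℝ (Fin m) → Fin K → ℝ)
    (θ' : EuclideanSpace ℝ (Fin m))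
    (hA1 : ∀ k, Ulu k < Ulc k)
    (hA3 : ∀ i k, Uic i θ' k < Uiu i θ' k)
    (y : Fin n → Fin K → ℝ) (hy : ∀ i, y i ∈ stratSet (K := K) (R i))
    (k' : Fin K) (hsame : ∀ i, y i k' = R i) :
    ((y, (∑ i, R i * ((Uiu i θ' k' - Uic i θ' k') / (Ulc k' - Ulu k'))) / (∑ i, R i))
        ∈ SOL R Ulc Ulu (fun i => Uic i θ') (fun i => Uiu i θ') y) ∧
    (SOL R Ulc Ulu (fun i => Uic i θ') (fun i => Uiu i θ') y).Nonempty := by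
  have : Nonempty (Fin n) := Fin.pos_iff_nonempty.1 hn
  exact SOL_nonempty_same_target_general (fun k => (hA1 k).ne) (hA1 k').le
    (Finset.sum_pos (fun i _ => mul_pos (hR i) (sub_pos.2 (hA3 i k'))) Finset.univ_nonempty)
    hy hsame
end
end
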